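/- Let G be cyclic of order n ≥ 2 and S a sequence over G of length 2n−2 with no product-one subsequence of length n. Then S = a^{[n-1]} · b^{[n-1]} for some a, b ∈ G with ord(a b^{-1}) = n. -/

import Mathlib

/-- A multiset `T` over a group is a product-one sequence if its terms can be
ordered so that their product is the identity. -/
def IsProdOne {G : Type*} [Group G] (T : Multiset G) : Prop :=
  ∃ l : List G, (l : Multiset G) = T ∧ l.prod = 1

/-- `S` has a product-one subsequence of length `n`. -/
def HasProdOneSubseqOfLen {G : Type*} [Group G] (S : Multiset G) (n : ℕ) : Prop :=
  ∃ T ≤ S, Multiset.card T = n ∧ IsProdOne T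

/-!
Let `n` be the order of the group. Translate `S` so that `1` is a term of maximal multiplicity `h`.
Outside `1^[h]`, remove a product-one subsequence `W` of maximal length at most `n`. Then
`|W| + h < n`, since otherwise terms equal to `1` pad `W` to length `n`; hence the remaining
sequence `R` has length at least `n - 1`, and by maximality of `W` no nonempty subsequence of `R`
of length at most `h + 1` has product one.

By Scherk's theorem, products of few terms of such a sequence are so numerous that the support of
`R` is closed under multiplication of distinct elements, which forces `R = c^[n-1]`, and then
`S = 1^[n-1] · c^[n-1]`.
-/

open Finset
open scoped Pointwise

theorem exists_dedup_add_eq {α : Type*} [DecidableEq α] {k : ℕ} {T : Multiset α}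
    (hcount : ∀ x, T.count x ≤ k + 1) :
    ∃ R, T.dedup + R = T ∧ ∀ x, R.count x ≤ k := by
  refine ⟨T - T.dedup, add_tsub_cancel_of_le T.dedup_le, fun x => ?_⟩
  have hx := hcount x
  rw [Multiset.count_sub, Multiset.count_dedup]
  split_ifs with hxT
  · omega
  · simp [Multiset.count_eq_zero_of_notMem hxT]

theorem card_le_card_mul_of_count_le {α : Type*} [Fintype α] [DecidableEq α] {h : ℕ}
    {S : Multiset α} (hcount : ∀ x, S.count x ≤ h) : Multiset.card S ≤ Fintype.card α * h :=
  calc Multiset.card S = ∑ x, S.count x := (Multiset.sum_count_eq_card fun x _ => mem_univ x).symm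
    _ ≤ Fintype.card α * h := sum_le_card_nsmul univ _ h fun x _ => hcount x

/-- Scherk's theorem. Either a Dyson transform strictly shrinks `B`, or `A` is stable under
multiplication by each `b ∈ B`; in the latter case `b • A = A` contains `1`, so `B = {1}`. -/
theorem card_add_card_le_card_mul_add_one {G : Type*} [CommGroup G] [DecidableEq G]
    {A B : Finset G} (hA : 1 ∈ A) (hB : 1 ∈ B) (hAB : ∀ a ∈ A, ∀ b ∈ B, a * b = 1 → b = 1) :
    #A + #B ≤ #(A * B) + 1 := by
  induction hk : #B using Nat.strong_induction_on generalizing A B with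
  | _ k ih =>
  subst hk
  by_cases hstable : ∀ a ∈ A, a • B ⊆ A
  · have hB1 : B = {1} := by
      refine eq_singleton_iff_unique_mem.2 ⟨hB, fun b hb => ?_⟩
      have hbA : b • A = A := by
        refine eq_of_subset_of_card_le (fun x hx => ?_) (card_smul_finset b A).ge
        obtain ⟨a, ha, rfl⟩ := mem_smul_finset.1 hx
        exact hstable a ha (mem_smul_finset.2 ⟨b, hb, mul_comm a b⟩)
      obtain ⟨a, ha, hab⟩ := mem_smul_finset.1 (hbA.symm ▸ hA)
      exact hAB a ha b hb ((mul_comm a b).trans hab)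
    simp [hB1]
  · push Not at hstable
    obtain ⟨e, he, hsub⟩ := hstable
    let A' := A ∪ e • B
    let B' := B ∩ e⁻¹ • A
    have hlt : #B' < #B := by
      refine card_lt_card (inter_subset_left.ssubset_of_ne fun h => hsub ?_)
      exact smul_finset_subset_iff.2 (inter_eq_left.1 h)
    have hunique : ∀ a ∈ A', ∀ b ∈ B', a * b = 1 → b = 1 := by
      intro a ha b hb hab
      obtain ⟨hbB, hbA⟩ := mem_inter.1 hb
      rcases mem_union.1 ha with ha | ha
      · exact hAB a ha b hbB hab
      obtain ⟨c, hc, rfl⟩ := mem_smul_finset.1 ha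
      have hebA : e * b ∈ A := mem_inv_smul_finset_iff.1 hbA
      have hc1 : c = 1 := hAB _ hebA c hc ((mul_right_comm e b c).trans hab)
      exact hAB e he b hbB (by simpa [hc1] using hab)
    have hcard : #A' + #B' = #A + #B := mulDysonETransform.card e (A, B)
    have hmul : A' * B' ⊆ A * B := mulDysonETransform.subset e (A, B)
    have h1B' : 1 ∈ B' := mem_inter.2 ⟨hB, mem_inv_smul_finset_iff.2 (by simpa using he)⟩
    calc #A + #B = #A' + #B' := hcard.symm
      _ ≤ #(A' * B') + 1 := ih _ hlt (mem_union_left _ hA) h1B' hunique rfl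
      _ ≤ #(A * B) + 1 := by gcongr

theorem inv_mul_mem_of_pairwise_mul_mem {G : Type*} [Group G] {A : Finset G}
    (h1 : 1 ∉ A) (hmul : (A : Set G).Pairwise fun x y => x * y ∈ A) {x y : G} (hx : x ∈ A)
    (hy : y ∈ A) (hxy : x ≠ y) : x⁻¹ * y ∈ A := by
  classical
  have hstable : x • A.erase x = A.erase x := by
    refine eq_of_subset_of_card_le (fun z hz => ?_) (card_smul_finset x (A.erase x)).ge
    obtain ⟨b, hb, rfl⟩ := mem_smul_finset.1 hz
    obtain ⟨hbx, hbA⟩ := mem_erase.1 hb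
    exact mem_erase.2 ⟨fun h => h1 (mul_eq_left.1 h ▸ hbA), hmul hx hbA hbx.symm⟩
  obtain ⟨b, hb, rfl⟩ := mem_smul_finset.1 (hstable.symm ▸ mem_erase.2 ⟨hxy.symm, hy⟩)
  rw [smul_eq_mul, inv_mul_cancel_left]
  exact mem_of_mem_erase hb

theorem mul_self_eq_one_of_pairwise_mul_mem {G : Type*} [CommGroup G] {A : Finset G}
    (h1 : 1 ∉ A) (hmul : (A : Set G).Pairwise fun x y => x * y ∈ A) {x y : G} (hx : x ∈ A)
    (hy : y ∈ A) (hxy : x ≠ y) : x * x = 1 := by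
  have hdiv : x⁻¹ * y ∈ A := inv_mul_mem_of_pairwise_mul_mem h1 hmul hx hy hxy
  have hne : y ≠ x⁻¹ * y := by
    intro h
    exact h1 (inv_eq_one.1 (mul_eq_right.1 h.symm) ▸ hx)
  have hinv : x⁻¹ ∈ A := by
    simpa [mul_comm x⁻¹ y] using inv_mul_mem_of_pairwise_mul_mem h1 hmul hy hdiv hne
  by_contra hsq
  exact h1 (by simpa using hmul hx hinv fun h => hsq (mul_eq_one_iff_eq_inv.2 h))

/-- `T` has no nonempty product-one subsequence of length at most `k`. -/
def ShortProdOneFree {M : Type*} [CommMonoid M] (k : ℕ) (T : Multiset M) : Prop :=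
  ∀ U ≤ T, Multiset.card U ≤ k → U.prod = 1 → U = 0

/-- The set of products of the subsequences of `T` of length at most `k`, the empty one included. -/
def shortProds {M : Type*} [CommMonoid M] [DecidableEq M] (k : ℕ) (T : Multiset M) : Finset M :=
  ((T.powerset.filter (Multiset.card · ≤ k)).map Multiset.prod).toFinset

section CommMonoid

variable {M : Type*} [CommMonoid M] {j k : ℕ} {P R T U : Multiset M}

theorem ShortProdOneFree.mono (hT : ShortProdOneFree j T) (hkj : k ≤ j) (hUT : U ≤ T) :
    ShortProdOneFree k U :=
  fun V hV hVk hV1 => hT V (hV.trans hUT) (hVk.trans hkj) hV1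

theorem ShortProdOneFree.one_notMem (hT : ShortProdOneFree k T) (hk : 1 ≤ k) : 1 ∉ T :=
  fun h => Multiset.singleton_ne_zero (1 : M) <|
    hT {1} (Multiset.singleton_le.2 h) (by simpa using hk) (by simp)

variable [DecidableEq M]

theorem mem_shortProds {x : M} :
    x ∈ shortProds k T ↔ ∃ U ≤ T, Multiset.card U ≤ k ∧ U.prod = x := by
  simp [shortProds, and_assoc]

theorem one_mem_shortProds : 1 ∈ shortProds k T :=
  mem_shortProds.2 ⟨0, Multiset.zero_le _, by simp, by simp⟩

theorem mem_shortProds_of_mem {x : M} (hk : 1 ≤ k) (hx : x ∈ T) : x ∈ shortProds k T :=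
  mem_shortProds.2 ⟨{x}, Multiset.singleton_le.2 hx, by simpa using hk, by simp⟩

theorem shortProds_mul_subset : shortProds j P * shortProds k R ⊆ shortProds (j + k) (P + R) := by
  intro x hx
  obtain ⟨_, hu, _, hv, rfl⟩ := mem_mul.1 hx
  obtain ⟨U, hU, hUj, rfl⟩ := mem_shortProds.1 hu
  obtain ⟨V, hV, hVk, rfl⟩ := mem_shortProds.1 hv
  refine mem_shortProds.2 ⟨U + V, add_le_add hU hV, ?_, Multiset.prod_add U V⟩
  rw [Multiset.card_add]
  exact add_le_add hUj hVk

theorem exists_prod_eq_one_and_shortProdOneFree_sub (n : ℕ) (T : Multiset M) :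
    ∃ W ≤ T, Multiset.card W ≤ n ∧ W.prod = 1 ∧
      ShortProdOneFree (n - Multiset.card W) (T - W) := by
  let candidates : Finset (Multiset M) :=
    {W ∈ T.powerset.toFinset | Multiset.card W ≤ n ∧ W.prod = 1}
  have mem_candidates {W : Multiset M} :
      W ∈ candidates ↔ W ≤ T ∧ Multiset.card W ≤ n ∧ W.prod = 1 := by
    simp [candidates]
  obtain ⟨W, hW, hmax⟩ := candidates.exists_max_image Multiset.card
    ⟨0, mem_candidates.2 ⟨Multiset.zero_le _, by simp, by simp⟩⟩
  obtain ⟨hWT, hWn, hW1⟩ := mem_candidates.1 hW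
  refine ⟨W, hWT, hWn, hW1, fun U hU hUn hU1 => ?_⟩
  have hWU : Multiset.card (W + U) ≤ Multiset.card W := by
    refine hmax _ (mem_candidates.2 ⟨?_, ?_, ?_⟩)
    · exact (add_le_add_right hU W).trans_eq (add_tsub_cancel_of_le hWT)
    · rw [Multiset.card_add]
      omega
    · rw [Multiset.prod_add, hW1, hU1, one_mul]
  rw [Multiset.card_add] at hWU
  exact Multiset.card_eq_zero.1 (by omega)

end CommMonoid

section CommGroup

variable {G : Type*} [CommGroup G]

section ShortProds

variable [DecidableEq G] {j k : ℕ} {P R T : Multiset G}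

theorem ShortProdOneFree.card_shortProds_add_le (hPR : ShortProdOneFree (j + k) (P + R)) :
    #(shortProds j P) + #(shortProds k R) ≤ #(shortProds (j + k) (P + R)) + 1 := by
  have hunique : ∀ u ∈ shortProds j P, ∀ v ∈ shortProds k R, u * v = 1 → v = 1 := by
    intro u hu v hv huv
    obtain ⟨U, hU, hUj, rfl⟩ := mem_shortProds.1 hu
    obtain ⟨V, hV, hVk, rfl⟩ := mem_shortProds.1 hv
    have hUV : U + V = 0 := hPR _ (add_le_add hU hV)
      (by rw [Multiset.card_add]; exact add_le_add hUj hVk) (by rwa [Multiset.prod_add])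
    rw [(add_eq_zero.1 hUV).2, Multiset.prod_zero]
  calc #(shortProds j P) + #(shortProds k R) ≤ #(shortProds j P * shortProds k R) + 1 :=
        card_add_card_le_card_mul_add_one one_mem_shortProds one_mem_shortProds hunique
    _ ≤ #(shortProds (j + k) (P + R)) + 1 := by
        gcongr
        exact shortProds_mul_subset

-- The elements of multiplicity greater than `i`, for `i < k`, form `k` sets partitioning `T`; the
-- induction splits off the first of them, the support.
theorem ShortProdOneFree.card_lt_card_shortProds (hT : ShortProdOneFree k T)
    (hcount : ∀ g, T.count g ≤ k) : Multiset.card T < #(shortProds k T) := by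
  induction k generalizing T with
  | zero =>
    obtain rfl : T = 0 :=
      Multiset.eq_zero_of_forall_notMem fun g => Multiset.count_eq_zero.1 (by simpa using hcount g)
    exact card_pos.2 ⟨1, one_mem_shortProds⟩
  | succ k ih =>
    obtain ⟨R, hsplit, hRcount⟩ := exists_dedup_add_eq hcount
    have hRT : R ≤ T := (Multiset.le_add_left R T.dedup).trans_eq hsplit
    have hsupport : Multiset.card T.dedup + 1 ≤ #(shortProds 1 T.dedup) := by
      have h1 : 1 ∉ T.toFinset := by simpa using hT.one_notMem (by omega)
      rw [← Multiset.card_toFinset, ← card_insert_of_notMem h1]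
      refine card_le_card (insert_subset one_mem_shortProds fun x hx => ?_)
      exact mem_shortProds_of_mem le_rfl (by simpa using hx)
    have hrest : Multiset.card R < #(shortProds k R) := ih (hT.mono (by omega) hRT) hRcount
    have hadd := card_shortProds_add_le (j := 1) (k := k) (P := T.dedup) (R := R)
      (by rwa [hsplit, add_comm])
    have hcard : Multiset.card T.dedup + Multiset.card R = Multiset.card T := by
      rw [← Multiset.card_add, hsplit]
    rw [hsplit, add_comm 1 k] at hadd
    omega

-- If `x * y ∉ T`, adjoining it to the support yields more than `|G|` short products.
theorem ShortProdOneFree.mul_mem [Fintype G] (hT : ShortProdOneFree (k + 2) T)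
    (hcount : ∀ g, T.count g ≤ k + 1) (hcard : Fintype.card G ≤ Multiset.card T + 1) {x y : G}
    (hx : x ∈ T) (hy : y ∈ T) (hxy : x ≠ y) : x * y ∈ T := by
  by_contra hmul
  obtain ⟨R, hsplit, hRcount⟩ := exists_dedup_add_eq hcount
  have hRT : R ≤ T := (Multiset.le_add_left R T.dedup).trans_eq hsplit
  have hpair : {x, y} ≤ T.dedup := by
    rw [Multiset.le_iff_subset (by simpa using hxy)]
    simp [Multiset.insert_eq_cons, Multiset.cons_subset, hx, hy]
  have hmul1 : x * y ≠ 1 := fun h => Multiset.cons_ne_zero <|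
    hT {x, y} (hpair.trans T.dedup_le) (by simp) (by simpa using h)
  have hsupport : Multiset.card T.dedup + 1 + 1 ≤ #(shortProds 2 T.dedup) := by
    have hmul' : x * y ∉ T.toFinset := by simpa using hmul
    have h1 : 1 ∉ insert (x * y) T.toFinset := by
      simpa [hmul1.symm] using hT.one_notMem (by omega)
    rw [← Multiset.card_toFinset, ← card_insert_of_notMem hmul', ← card_insert_of_notMem h1]
    refine card_le_card (insert_subset one_mem_shortProds (insert_subset ?_ fun z hz => ?_))
    · exact mem_shortProds.2 ⟨{x, y}, hpair, by simp, by simp⟩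
    · exact mem_shortProds_of_mem one_le_two (by simpa using hz)
  have hrest : Multiset.card R < #(shortProds k R) :=
    (hT.mono (by omega) hRT).card_lt_card_shortProds hRcount
  have hadd := card_shortProds_add_le (j := 2) (k := k) (P := T.dedup) (R := R)
    (by rwa [hsplit, add_comm])
  have hle := card_le_univ (shortProds (2 + k) (T.dedup + R))
  have hcardT : Multiset.card T.dedup + Multiset.card R = Multiset.card T := by
    rw [← Multiset.card_add, hsplit]
  omega

-- Otherwise `T` contains two distinct involutions `x`, `y` and `x * y`, whose product is `1`.
theorem ShortProdOneFree.eq_of_mem [Fintype G] (hT : ShortProdOneFree (k + 1) T) (hk : 2 ≤ k)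
    (hcount : ∀ g, T.count g ≤ k) (hcard : Fintype.card G ≤ Multiset.card T + 1) {x y : G}
    (hx : x ∈ T) (hy : y ∈ T) : x = y := by
  obtain ⟨k, rfl⟩ : ∃ i, k = i + 1 := ⟨k - 1, by omega⟩
  by_contra hxy
  have h1 : 1 ∉ T.toFinset := by simpa using hT.one_notMem (by omega)
  have hmul : (T.toFinset : Set G).Pairwise fun u v => u * v ∈ T.toFinset := by
    intro u hu v hv huv
    simp only [mem_coe, Multiset.mem_toFinset] at hu hv ⊢
    exact hT.mul_mem hcount hcard hu hv huv
  rw [← Multiset.mem_toFinset] at hx hy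
  have hxx : x * x = 1 := mul_self_eq_one_of_pairwise_mul_mem h1 hmul hx hy hxy
  have hyy : y * y = 1 := mul_self_eq_one_of_pairwise_mul_mem h1 hmul hy hx (Ne.symm hxy)
  have htriple : {x * y, x, y} ≤ T := by
    have hx1 : x ≠ 1 := ne_of_mem_of_not_mem hx h1
    have hy1 : y ≠ 1 := ne_of_mem_of_not_mem hy h1
    rw [Multiset.le_iff_subset (by simp [hxy, hx1, hy1])]
    have hxyT : x * y ∈ T.toFinset := hmul hx hy hxy
    rw [Multiset.mem_toFinset] at hx hy hxyT
    simp [Multiset.insert_eq_cons, Multiset.cons_subset, hx, hy, hxyT]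
  have hprod : ({x * y, x, y} : Multiset G).prod = 1 := by
    simp [mul_mul_mul_comm, hxx, hyy]
  exact Multiset.cons_ne_zero (hT _ htriple (by simpa using hk) hprod)

end ShortProds

theorem hasProdOneSubseqOfLen_iff {S : Multiset G} {n : ℕ} :
    HasProdOneSubseqOfLen S n ↔ ∃ T ≤ S, Multiset.card T = n ∧ T.prod = 1 := by
  have isProdOne_iff (T : Multiset G) : IsProdOne T ↔ T.prod = 1 := by
    constructor
    · rintro ⟨l, rfl, hl⟩
      rwa [Multiset.prod_coe]
    · intro hT
      exact ⟨T.toList, T.coe_toList, by rwa [Multiset.prod_toList]⟩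
  simp only [HasProdOneSubseqOfLen, isProdOne_iff]

theorem hasProdOneSubseqOfLen_of_map_mul_right {S : Multiset G} {n : ℕ} {g : G} (hg : g ^ n = 1)
    (h : HasProdOneSubseqOfLen (S.map (· * g)) n) : HasProdOneSubseqOfLen S n := by
  rw [hasProdOneSubseqOfLen_iff] at h ⊢
  obtain ⟨T, hTS, hTn, hT1⟩ := h
  refine ⟨T.map (· * g⁻¹), ?_, by rwa [Multiset.card_map], ?_⟩
  · simpa [Multiset.map_map] using Multiset.map_le_map (f := (· * g⁻¹)) hTS
  · simp [Multiset.prod_map_mul, hT1, hTn, hg]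

theorem orderOf_mul_inv_eq_card_of_not_hasProdOneSubseqOfLen [Fintype G] {a b : G}
    (hno : ¬ HasProdOneSubseqOfLen (Multiset.replicate (Fintype.card G - 1) a +
      Multiset.replicate (Fintype.card G - 1) b) (Fintype.card G)) :
    orderOf (a * b⁻¹) = Fintype.card G := by
  by_contra hne
  have hlt : orderOf (a * b⁻¹) < Fintype.card G := orderOf_le_card_univ.lt_of_ne hne
  have hpos : 0 < orderOf (a * b⁻¹) := orderOf_pos _
  have hpow : a ^ orderOf (a * b⁻¹) = b ^ orderOf (a * b⁻¹) := by
    rw [← mul_inv_eq_one, ← inv_pow, ← mul_pow, pow_orderOf_eq_one]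
  refine hno (hasProdOneSubseqOfLen_iff.2 ⟨Multiset.replicate (orderOf (a * b⁻¹)) a +
    Multiset.replicate (Fintype.card G - orderOf (a * b⁻¹)) b, ?_, ?_, ?_⟩)
  · exact add_le_add ((Multiset.replicate_le_replicate a).2 (by omega))
      ((Multiset.replicate_le_replicate b).2 (by omega))
  · simpa using Nat.add_sub_cancel' hlt.le
  · rw [Multiset.prod_add, Multiset.prod_replicate, Multiset.prod_replicate, hpow, ← pow_add,
      Nat.add_sub_cancel' hlt.le, pow_card_eq_one]

theorem exists_eq_replicate_one_add_add_of_not_hasProdOneSubseqOfLen [DecidableEq G]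
    {S : Multiset G} {n : ℕ} (hno : ¬ HasProdOneSubseqOfLen S n) :
    ∃ W R, S = Multiset.replicate (S.count 1) 1 + W + R ∧ Multiset.card W + S.count 1 < n ∧
      ShortProdOneFree (S.count 1 + 1) R := by
  have hrep : Multiset.replicate (S.count 1) 1 ≤ S := Multiset.le_count_iff_replicate_le.1 le_rfl
  obtain ⟨T, hT⟩ := Multiset.le_iff_exists_add.1 hrep
  obtain ⟨W, hWT, hWn, hW1, hfree⟩ := exists_prod_eq_one_and_shortProdOneFree_sub n T
  have hlt : Multiset.card W + S.count 1 < n := by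
    by_contra! hle
    refine hno (hasProdOneSubseqOfLen_iff.2
      ⟨Multiset.replicate (n - Multiset.card W) 1 + W, ?_, ?_, ?_⟩)
    · exact (add_le_add ((Multiset.replicate_le_replicate 1).2 (by omega)) hWT).trans_eq hT.symm
    · simpa using Nat.sub_add_cancel hWn
    · simp [hW1]
  refine ⟨W, T - W, ?_, hlt, hfree.mono (by omega) le_rfl⟩
  rwa [add_assoc, add_tsub_cancel_of_le hWT]

theorem exists_eq_replicate_one_add_replicate [Fintype G] [DecidableEq G] {S : Multiset G}
    (hG : 3 ≤ Fintype.card G) (hS : Multiset.card S = 2 * Fintype.card G - 2)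
    (hmax : ∀ g, S.count g ≤ S.count 1) (hno : ¬ HasProdOneSubseqOfLen S (Fintype.card G)) :
    ∃ c, S = Multiset.replicate (Fintype.card G - 1) 1 +
      Multiset.replicate (Fintype.card G - 1) c := by
  obtain ⟨W, R, hdecomp, hlt, hfree⟩ :=
    exists_eq_replicate_one_add_add_of_not_hasProdOneSubseqOfLen hno
  have hcard : S.count 1 + Multiset.card W + Multiset.card R = 2 * Fintype.card G - 2 := by
    rw [← hS]
    simpa using (congrArg Multiset.card hdecomp).symm
  have htwo : 2 ≤ S.count 1 := by
    by_contra! hle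
    have hcardS := card_le_card_mul_of_count_le (S := S) (h := 1)
      fun g => (hmax g).trans (Nat.le_of_lt_succ hle)
    omega
  have hRcount (g : G) : R.count g ≤ S.count 1 :=
    (Multiset.count_le_of_le g (hdecomp ▸ Multiset.le_add_left R _)).trans (hmax g)
  obtain ⟨c, hc⟩ := Multiset.card_pos_iff_exists_mem.1 (show 0 < Multiset.card R by omega)
  have hR : R = Multiset.replicate (Multiset.card R) c :=
    Multiset.eq_replicate_card.2 fun _ hx => hfree.eq_of_mem htwo hRcount (by omega) hx hc
  have hRle : Multiset.card R ≤ S.count 1 := by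
    have hle := hRcount c
    rwa [hR, Multiset.count_replicate_self] at hle
  have hW : W = 0 := Multiset.card_eq_zero.1 (by omega)
  refine ⟨c, ?_⟩
  rw [hdecomp, hW, add_zero, hR]
  congr <;> omega

end CommGroup

theorem inverse_two_n_sub_two_general {G : Type*} [CommGroup G] [Fintype G] (S : Multiset G)
    (hS : Multiset.card S = 2 * Fintype.card G - 2)
    (hno : ¬ HasProdOneSubseqOfLen S (Fintype.card G)) :
    ∃ a b : G, orderOf (a * b⁻¹) = Fintype.card G ∧
      S = Multiset.replicate (Fintype.card G - 1) a +
        Multiset.replicate (Fintype.card G - 1) b := by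
  classical
  suffices ∃ a b : G, S = Multiset.replicate (Fintype.card G - 1) a +
      Multiset.replicate (Fintype.card G - 1) b by
    obtain ⟨a, b, rfl⟩ := this
    exact ⟨a, b, orderOf_mul_inv_eq_card_of_not_hasProdOneSubseqOfLen hno, rfl⟩
  have hpos : 0 < Fintype.card G := Fintype.card_pos
  obtain hone | htwo | hthree :
      Fintype.card G = 1 ∨ Fintype.card G = 2 ∨ 3 ≤ Fintype.card G := by omega
  · rw [hone] at hS ⊢
    exact ⟨1, 1, by simpa using hS⟩
  · rw [htwo] at hS ⊢
    obtain ⟨a, b, rfl⟩ := Multiset.card_eq_two.1 hS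
    exact ⟨a, b, rfl⟩
  obtain ⟨g, -, hg⟩ := univ.exists_max_image (S.count ·) ⟨1, mem_univ _⟩
  have hcount (x : G) : (S.map (· * g⁻¹)).count x = S.count (x * g) := by
    simpa using Multiset.count_map_eq_count' _ S (mul_left_injective g⁻¹) (x * g)
  obtain ⟨c, hc⟩ := exists_eq_replicate_one_add_replicate (S := S.map (· * g⁻¹)) hthree
    (by rwa [Multiset.card_map]) (fun x => by simpa [hcount] using hg (x * g) (mem_univ _))
    fun h => hno (hasProdOneSubseqOfLen_of_map_mul_right pow_card_eq_one h)
  exact ⟨g, c * g, by simpa [Multiset.map_map] using congrArg (Multiset.map (· * g)) hc⟩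

/-- If `G` is cyclic of order `n ≥ 2` and `S` is a sequence of length `2n - 2`
over `G` with no product-one subsequence of length `n`, then
`S = a^[n-1] · b^[n-1]` where `ord(ab⁻¹) = n`. -/
theorem inverse_two_n_sub_two (G : Type*) [Group G] [Fintype G]
    (hG : IsCyclic G) (n : ℕ) (hn : 2 ≤ n) (hcard : Fintype.card G = n)
    (S : Multiset G) (hS : Multiset.card S = 2 * n - 2)
    (hno : ¬ HasProdOneSubseqOfLen S n) :
    ∃ a b : G, orderOf (a * b⁻¹) = n ∧
      S = Multiset.replicate (n - 1) a + Multiset.replicate (n - 1) b := by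
  let := hG.commGroup
  subst hcard
  exact inverse_two_n_sub_two_general S hS hno
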